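/- arXiv:2201.09262 — 3 statements merged into one kernel-verified Lean document; each statement's English description precedes it below -/
import Mathlib

section
/- For every positive integer n, the multiple t-value t(2,2,...,2) with n twos equals π^(2n)/(2^(2n)·(2n)!). -/
open Real

open Filter Topology in
lemma cos_prod_aux (z : ℂ) (hz : ‖z‖ < 1) :
    Tendsto (fun N : ℕ => ∏ i ∈ Finset.range N, (1 + -z ^ 2 * (1 / (2 * (i : ℂ) + 1) ^ 2)))
      atTop (𝓝 (Complex.cos (π / 2 * z))) := by
  by_cases h0 : z = 0
  · subst h0
    simp
  have hs : Complex.sin (π * (z / 2)) ≠ 0 := by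
    intro h
    rw [Complex.sin_eq_zero_iff] at h
    obtain ⟨k, hk⟩ := h
    have hpi : (π : ℂ) ≠ 0 := by exact_mod_cast Real.pi_ne_zero
    have hzk : z = 2 * (k : ℂ) := by
      have : (π : ℂ) * z = π * (2 * k) := by linear_combination 2 * hk
      exact mul_left_cancel₀ hpi this
    have hk0 : k ≠ 0 := by
      rintro rfl
      simp at hzk
      exact h0 hzk
    have h1 : (1 : ℝ) ≤ |(k : ℝ)| := by exact_mod_cast Int.one_le_abs hk0
    rw [hzk] at hz
    simp at hz
    linarith
  have h1 := (Complex.tendsto_euler_sin_prod z).comp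
    (tendsto_id.const_mul_atTop' (show 0 < 2 by norm_num) : Tendsto (fun N : ℕ => 2 * N) atTop atTop)
  have h2 := Complex.tendsto_euler_sin_prod (z / 2)
  have key : ∀ N : ℕ, ∏ j ∈ Finset.range (2 * N), (1 - z ^ 2 / ((j : ℂ) + 1) ^ 2) =
      (∏ i ∈ Finset.range N, (1 + -z ^ 2 * (1 / (2 * (i : ℂ) + 1) ^ 2))) *
      ∏ j ∈ Finset.range N, (1 - (z / 2) ^ 2 / ((j : ℂ) + 1) ^ 2) := by
    intro N
    induction N with
    | zero => simp
    | succ N ih =>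
      rw [show 2 * (N + 1) = 2 * N + 1 + 1 by ring, Finset.prod_range_succ, Finset.prod_range_succ,
        ih, Finset.prod_range_succ, Finset.prod_range_succ]
      have e1 : (1 - z ^ 2 / (((2 * N : ℕ) : ℂ) + 1) ^ 2) =
          (1 + -z ^ 2 * (1 / (2 * (N : ℂ) + 1) ^ 2)) := by
        push_cast; ring
      have e2 : (1 - z ^ 2 / (((2 * N + 1 : ℕ) : ℂ) + 1) ^ 2) =
          (1 - (z / 2) ^ 2 / ((N : ℂ) + 1) ^ 2) := by
        have : (N : ℂ) + 1 ≠ 0 := by exact_mod_cast Nat.succ_ne_zero N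
        push_cast
        rw [show (2 * (N : ℂ) + 1 + 1) = 2 * (N + 1) by ring]
        field_simp
      rw [e1, e2]
      ring
  have h3 := h1.div h2 hs
  have h4 : Complex.sin (π * z) / Complex.sin (π * (z / 2)) = 2 * Complex.cos (π / 2 * z) := by
    rw [show (π : ℂ) * z = 2 * (π * (z / 2)) by ring, Complex.sin_two_mul,
      show (π : ℂ) / 2 * z = π * (z / 2) by ring]
    rw [div_eq_iff hs]
    ring
  rw [h4] at h3
  have h5 := h3.const_mul (1 / 2 : ℂ)
  rw [show (1 / 2 : ℂ) * (2 * Complex.cos (π / 2 * z)) = Complex.cos (π / 2 * z) by ring] at h5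
  refine h5.congr' ?_
  filter_upwards [h2.eventually_ne hs] with N hN
  simp only [Pi.div_apply, Function.comp, key]
  have hpi : (π : ℂ) ≠ 0 := by exact_mod_cast Real.pi_ne_zero
  have hP := right_ne_zero_of_mul hN
  generalize (∏ j ∈ Finset.range N, (1 - (z / 2) ^ 2 / ((j : ℂ) + 1) ^ 2)) = A at *
  generalize (∏ i ∈ Finset.range N, (1 + -z ^ 2 * (1 / (2 * (i : ℂ) + 1) ^ 2))) = B at *
  field_simp

lemma bij_aux : Function.Bijective
    (fun p : (Σ n : ℕ, {f : Fin n → ℕ // StrictMono f}) => Finset.univ.image p.2.1) := by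
  constructor
  · rintro ⟨n, f, hf⟩ ⟨m, g, hg⟩ h
    simp only at h
    have hc := congrArg Finset.card h
    rw [Finset.card_image_of_injective _ hf.injective,
      Finset.card_image_of_injective _ hg.injective] at hc
    simp at hc
    subst hc
    have : f = g := by
      rw [← hf.range_inj hg, ← Set.image_univ, ← Set.image_univ, ← Finset.coe_univ,
        ← Finset.coe_image, ← Finset.coe_image, h]
    subst this
    rfl
  · intro s
    refine ⟨⟨s.card, s.orderEmbOfFin rfl, (s.orderEmbOfFin rfl).strictMono⟩, ?_⟩
    apply Finset.coe_injective
    simp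

lemma summable_aux : Summable (fun i : ℕ => (1 / (2 * (i : ℂ) + 1) ^ 2)) := by
  have h : Summable (fun i : ℕ => 1 / ((i : ℝ) + 1) ^ 2) := by
    have := (summable_nat_add_iff 1).2 (Real.summable_one_div_nat_pow.2 (show 1 < 2 by norm_num))
    simpa using this
  refine Summable.of_norm_bounded h ?_
  intro i
  have : ‖(1 / (2 * (i : ℂ) + 1) ^ 2)‖ = 1 / (2 * (i : ℝ) + 1) ^ 2 := by
    have : (1 / (2 * (i : ℂ) + 1) ^ 2) = ((1 / (2 * (i : ℝ) + 1) ^ 2 : ℝ) : ℂ) := by push_cast; rfl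
    rw [this, Complex.norm_real, Real.norm_of_nonneg (by positivity)]
  rw [this]
  gcongr
  linarith [(Nat.cast_nonneg i : (0 : ℝ) ≤ i)]

lemma series_aux (x : ℂ) (hx : ‖x‖ < 1) :
    ∃ v : ℂ, HasSum (fun n : ℕ => x ^ n * ∑' f : {f : Fin n → ℕ // StrictMono f},
      ∏ i, 1 / (2 * (f.1 i : ℂ) + 1) ^ 2) v ∧
      HasSum (fun n : ℕ => x ^ n * ((π : ℂ) ^ (2 * n) / (2 ^ (2 * n) * Nat.factorial (2 * n)))) v := by
  obtain ⟨z, hz⟩ := IsAlgClosed.exists_pow_nat_eq (-x) (show 0 < 2 by norm_num)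
  have hxz : x = -z ^ 2 := by rw [hz]; ring
  have hz1 : ‖z‖ < 1 := by
    rw [hxz, norm_neg, norm_pow] at hx
    exact (pow_lt_one_iff_of_nonneg (norm_nonneg z) two_ne_zero).1 hx
  have hsm : Summable (fun s : Finset ℕ => ∏ i ∈ s, (x * (1 / (2 * (i : ℂ) + 1) ^ 2))) :=
    summable_finsetProd_of_summable_norm (summable_aux.mul_left x).norm
  have hprod := (hasProd_one_add_of_hasSum_prod hsm.hasSum).tendsto_prod_nat
  have hval := tendsto_nhds_unique hprod (hxz ▸ cos_prod_aux z hz1)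
  have hS := hsm.hasSum
  rw [hval] at hS
  refine ⟨Complex.cos (π / 2 * z), ?_, ?_⟩
  · have hS2 := (Equiv.ofBijective _ bij_aux).hasSum_iff.2 hS
    have hS3 := hS2.sigma (fun n => (hS2.summable.sigma_factor n).hasSum)
    convert hS3 using 2 with n
    rw [← tsum_mul_left]
    congr 1
    ext f
    simp only [Function.comp, Equiv.ofBijective_apply]
    rw [Finset.prod_image f.2.injective.injOn, Finset.prod_mul_distrib]
    simp
  · convert Complex.hasSum_cos (π / 2 * z) using 2 with n
    rw [hxz, mul_pow, neg_pow, ← pow_mul, div_pow]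
    field_simp

theorem t_two_pow (n : ℕ) (hn : 0 < n) :
    (∑' f : {f : Fin n → ℕ // StrictMono f},
      ∏ i, 1 / (2 * (f.1 i : ℝ) + 1) ^ 2) =
      π ^ (2 * n) / (2 ^ (2 * n) * Nat.factorial (2 * n)) := by
  set c : ℕ → ℂ := fun n => ∑' f : {f : Fin n → ℕ // StrictMono f},
      ∏ i, 1 / (2 * (f.1 i : ℂ) + 1) ^ 2 with hc
  set d : ℕ → ℂ := fun n => (π : ℂ) ^ (2 * n) / (2 ^ (2 * n) * Nat.factorial (2 * n)) with hd
  have hb : ∀ᶠ x : ℂ in nhds 0, ‖x‖ < 1 := by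
    have := Metric.ball_mem_nhds (0 : ℂ) one_pos
    filter_upwards [this] with x hx
    simpa using hx
  have h1 : HasFPowerSeriesAt (fun x : ℂ => ∑' n, x ^ n * c n)
      (FormalMultilinearSeries.ofScalars ℂ c) 0 := by
    rw [hasFPowerSeriesAt_iff]
    filter_upwards [hb] with x hx
    obtain ⟨v, hv, -⟩ := series_aux x hx
    rw [zero_add, show ∑' n, x ^ n * c n = v from hv.tsum_eq]
    simpa only [FormalMultilinearSeries.coeff_ofScalars, smul_eq_mul] using hv
  have h2 : HasFPowerSeriesAt (fun x : ℂ => ∑' n, x ^ n * c n)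
      (FormalMultilinearSeries.ofScalars ℂ d) 0 := by
    rw [hasFPowerSeriesAt_iff]
    filter_upwards [hb] with x hx
    obtain ⟨v, hv, hv'⟩ := series_aux x hx
    rw [zero_add, show ∑' n, x ^ n * c n = v from hv.tsum_eq]
    simpa only [FormalMultilinearSeries.coeff_ofScalars, smul_eq_mul] using hv'
  have h3 := congrArg (fun p => p.coeff n) (h1.eq_formalMultilinearSeries h2)
  simp only [FormalMultilinearSeries.coeff_ofScalars] at h3
  apply Complex.ofReal_injective
  rw [Complex.ofReal_tsum]
  push_cast
  exact h3
end

section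
/- For every positive integer n and nonnegative integer b, ∫₀¹ x^(2n−1) · (2·arccos x)^(2b+1)/(2b+1)! dx = (C(2n,n)/(n·4^n)) · (π/2) · Σ_{n < m₁ < ... < m_b} 1/(m₁² ⋯ m_b²), where for b = 0 the sum over m's is interpreted as 1. -/
open Real

/-- `∑_{n < m₁ < ⋯ < m_b} 1/(m₁² ⋯ m_b²)`; equals `1` when `b = 0`. -/
noncomputable def zetaTail (b n : ℕ) : ℝ :=
  ∑' f : {f : Fin b → ℕ // StrictMono f ∧ ∀ i, n < f i}, ∏ i, 1 / ((f.1 i : ℝ)) ^ 2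

/-- scaled monomial -/
noncomputable def pp (k : ℕ) (t : ℝ) : ℝ := (2 * t) ^ k / (Nat.factorial k : ℝ)

lemma pp_deriv (k : ℕ) (t : ℝ) : HasDerivAt (pp (k + 1)) (2 * pp k t) t := by
  have h := (((hasDerivAt_id t).const_mul 2).pow (k + 1)).div_const (Nat.factorial (k + 1) : ℝ)
  have e : (2 * pp k t) = ((k + 1 : ℕ) : ℝ) * (2 * id t) ^ (k + 1 - 1) * (2 * 1) /
      (Nat.factorial (k + 1) : ℝ) := by
    have h1 : (Nat.factorial k : ℝ) ≠ 0 := by positivity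
    have h2 : (k : ℝ) + 1 ≠ 0 := by positivity
    unfold pp
    rw [Nat.factorial_succ]
    push_cast
    simp only [id, Nat.add_sub_cancel]
    field_simp
  rw [e]
  exact h

lemma pp_zero (k : ℕ) : pp (k + 1) 0 = 0 := by simp [pp]

lemma pp_base (t : ℝ) : pp 0 t = 1 := by simp [pp]

lemma pp_cont (k : ℕ) : Continuous (pp k) := by
  unfold pp; fun_prop

noncomputable def JJ (n b : ℕ) : ℝ := ∫ t in (0:ℝ)..(π / 2), cos t ^ (2 * n) * pp (2 * b) t

lemma jj_int (n b : ℕ) (a c : ℝ) :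
    IntervalIntegrable (fun t => cos t ^ (2 * n) * pp (2 * b) t) MeasureTheory.volume a c := by
  have := pp_cont (2 * b)
  exact Continuous.intervalIntegrable (by fun_prop) _ _

lemma cos_pow_deriv (k : ℕ) (t : ℝ) :
    HasDerivAt (fun t => cos t ^ (k + 1)) (-((k : ℝ) + 1) * cos t ^ k * sin t) t := by
  have h := (hasDerivAt_cos t).pow (k + 1)
  refine HasDerivAt.congr_deriv h ?_
  push_cast
  ring

lemma cos_pow_deriv2 (k : ℕ) (t : ℝ) :
    HasDerivAt (fun t => -((k : ℝ) + 2) * cos t ^ (k + 1) * sin t)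
      (((k : ℝ) + 2) * ((k : ℝ) + 1) * cos t ^ k - ((k : ℝ) + 2) ^ 2 * cos t ^ (k + 2)) t := by
  have h := ((cos_pow_deriv k t).const_mul (-((k : ℝ) + 2))).mul (hasDerivAt_sin t)
  refine HasDerivAt.congr_deriv h ?_
  have : sin t ^ 2 = 1 - cos t ^ 2 := by rw [← sin_sq_add_cos_sq t]; ring
  linear_combination (((k : ℝ) + 2) * ((k : ℝ) + 1) * cos t ^ k) * this

lemma jj_rec (n b : ℕ) :
    4 * JJ (n + 1) b = (2 * n + 2) * (2 * n + 1) * JJ n (b + 1) - (2 * n + 2) ^ 2 * JJ (n + 1) (b + 1) := by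
  have key : ∫ t in (0:ℝ)..(π / 2),
      ((2 * n + 2) * (2 * n + 1) * (cos t ^ (2 * n) * pp (2 * (b + 1)) t)
        - (2 * n + 2) ^ 2 * (cos t ^ (2 * (n + 1)) * pp (2 * (b + 1)) t)
        - 4 * (cos t ^ (2 * (n + 1)) * pp (2 * b) t)) = 0 := by
    rw [intervalIntegral.integral_eq_sub_of_hasDerivAt (f := fun t =>
      (-((2 * n : ℕ) + 2 : ℝ) * cos t ^ (2 * n + 1) * sin t) * pp (2 * b + 1 + 1) t
        - cos t ^ (2 * n + 1 + 1) * (2 * pp (2 * b + 1) t))]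
    · simp [pp_zero]
    · intro t _
      have h := ((cos_pow_deriv2 (2 * n) t).mul (pp_deriv (2 * b + 1) t)).sub
        ((cos_pow_deriv (2 * n + 1) t).mul ((pp_deriv (2 * b) t).const_mul 2))
      refine HasDerivAt.congr_deriv h ?_
      push_cast
      rw [show 2 * (b + 1) = 2 * b + 1 + 1 by ring]
      ring
    · exact (((jj_int n (b+1) _ _).const_mul _).sub ((jj_int (n+1) (b+1) _ _).const_mul _)).sub
        ((jj_int (n+1) b _ _).const_mul _)
  rw [intervalIntegral.integral_sub (((jj_int n (b+1) _ _).const_mul _).sub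
    ((jj_int (n+1) (b+1) _ _).const_mul _)) ((jj_int (n+1) b _ _).const_mul _),
    intervalIntegral.integral_sub ((jj_int n (b+1) _ _).const_mul _)
    ((jj_int (n+1) (b+1) _ _).const_mul _)] at key
  simp only [intervalIntegral.integral_const_mul] at key
  unfold JJ
  linarith

lemma jj_rec0 (n : ℕ) :
    (2 * n + 2) * JJ (n + 1) 0 = (2 * n + 1) * JJ n 0 := by
  have key : ∫ t in (0:ℝ)..(π / 2),
      ((2 * n + 2) * (2 * n + 1) * (cos t ^ (2 * n) * pp (2 * 0) t)
        - (2 * n + 2) ^ 2 * (cos t ^ (2 * (n + 1)) * pp (2 * 0) t)) = 0 := by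
    rw [intervalIntegral.integral_eq_sub_of_hasDerivAt (f := fun t =>
      (-((2 * n : ℕ) + 2 : ℝ) * cos t ^ (2 * n + 1) * sin t))]
    · simp
    · intro t _
      refine HasDerivAt.congr_deriv (cos_pow_deriv2 (2 * n) t) ?_
      simp only [mul_zero, pp_base]
      push_cast
      ring
    · exact (((jj_int n 0 _ _).const_mul _).sub ((jj_int (n+1) 0 _ _).const_mul _))
  rw [intervalIntegral.integral_sub ((jj_int n 0 _ _).const_mul _)
    ((jj_int (n+1) 0 _ _).const_mul _)] at key
  simp only [intervalIntegral.integral_const_mul] at key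
  have h2 : (2 * (n:ℝ) + 2) ≠ 0 := by positivity
  apply mul_left_cancel₀ h2
  unfold JJ
  linarith

noncomputable def cc (n : ℕ) : ℝ := (Nat.choose (2 * n) n : ℝ) / 4 ^ n * (π / 2)

lemma cc_pos (n : ℕ) : 0 < cc n := by
  have := Nat.choose_pos (n := 2 * n) (k := n) (by omega)
  have := pi_pos
  unfold cc; positivity

lemma cc_rec (n : ℕ) : (2 * n + 2) * cc (n + 1) = (2 * n + 1) * cc n := by
  have h := Nat.succ_mul_centralBinom_succ n
  simp only [Nat.centralBinom] at h
  have h' : ((n:ℝ) + 1) * (Nat.choose (2 * (n+1)) (n+1) : ℝ) = 2 * (2 * n + 1) * (Nat.choose (2 * n) n : ℝ) := by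
    exact_mod_cast h
  unfold cc
  rw [pow_succ]
  field_simp
  linear_combination 2 * h'

lemma jj_zero (n : ℕ) : JJ n 0 = cc n := by
  induction n with
  | zero => simp [JJ, cc, pp]
  | succ n ih =>
    have h2 : (2 * (n:ℝ) + 2) ≠ 0 := by positivity
    apply mul_left_cancel₀ h2
    rw [jj_rec0, cc_rec, ih]

noncomputable def KK (n b : ℕ) : ℝ := JJ n b / cc n

lemma kk_rec (n b : ℕ) : KK n (b + 1) - KK (n + 1) (b + 1) = 1 / ((n:ℝ) + 1) ^ 2 * KK (n + 1) b := by
  have h1 := (cc_pos n).ne'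
  have h2 := (cc_pos (n + 1)).ne'
  have h3 : (2 * (n:ℝ) + 1) ≠ 0 := by positivity
  have e : cc n = (2 * n + 2) * cc (n + 1) / (2 * n + 1) := by
    rw [cc_rec]; field_simp
  have h := jj_rec n b
  unfold KK
  rw [e]
  field_simp
  linear_combination (-1/2) * h

lemma jj_nonneg (n b : ℕ) : 0 ≤ JJ n b := by
  unfold JJ
  apply intervalIntegral.integral_nonneg (by positivity)
  intro t ht
  have := ht.1
  unfold pp
  rw [pow_mul]
  positivity

lemma kk_nonneg (n b : ℕ) : 0 ≤ KK n b := div_nonneg (jj_nonneg n b) (cc_pos n).le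

lemma jj_bound (n b : ℕ) : JJ n (b + 1) ≤ π ^ (2 * (b + 1)) * (JJ n 0 - JJ (n + 1) 0) := by
  unfold JJ
  rw [← intervalIntegral.integral_sub (jj_int n 0 _ _) (jj_int (n+1) 0 _ _),
    ← intervalIntegral.integral_const_mul]
  apply intervalIntegral.integral_mono_on (by positivity) (jj_int n _ _ _)
    (((jj_int n 0 _ _).sub (jj_int (n+1) 0 _ _)).const_mul _)
  intro t ht
  have hs : 2 / π * t ≤ sin t := mul_le_sin ht.1 ht.2
  have hs1 : 2 * t ≤ π * sin t := by
    have := mul_le_mul_of_nonneg_left hs pi_pos.le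
    have e : π * (2 / π * t) = 2 * t := by field_simp
    linarith
  have h0 : 0 ≤ t := ht.1
  have hsn : 0 ≤ sin t := by
    have : 0 ≤ 2 / π * t := by positivity
    linarith
  have hp : pp (2 * (b + 1)) t ≤ π ^ (2 * (b + 1)) * sin t ^ 2 := by
    unfold pp
    calc (2 * t) ^ (2 * (b + 1)) / (Nat.factorial (2 * (b + 1)) : ℝ) ≤ (2 * t) ^ (2 * (b + 1)) := by
          apply div_le_self (by positivity)
          exact_mod_cast Nat.factorial_pos _
      _ ≤ (π * sin t) ^ (2 * (b + 1)) := by gcongr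
      _ = π ^ (2 * (b + 1)) * sin t ^ (2 * (b + 1)) := mul_pow _ _ _
      _ ≤ π ^ (2 * (b + 1)) * sin t ^ 2 := by
          apply mul_le_mul_of_nonneg_left _ (by positivity)
          exact pow_le_pow_of_le_one hsn (sin_le_one t) (by omega)
  have hc : 0 ≤ cos t ^ (2 * n) := by rw [pow_mul]; positivity
  have e : sin t ^ 2 = 1 - cos t ^ 2 := by rw [← sin_sq_add_cos_sq t]; ring
  calc _ ≤ cos t ^ (2 * n) * (π ^ (2 * (b + 1)) * sin t ^ 2) := mul_le_mul_of_nonneg_left hp hc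
    _ = _ := by
      rw [e]; simp only [mul_zero, pp_base]; ring

lemma kk_bound (n b : ℕ) : KK n (b + 1) ≤ π ^ (2 * (b + 1)) * (1 / ((n : ℝ) + 1)) := by
  unfold KK
  rw [div_le_iff₀ (cc_pos n)]
  refine (jj_bound n b).trans ?_
  rw [jj_zero, jj_zero, mul_assoc]
  apply mul_le_mul_of_nonneg_left _ (by positivity)
  have h := cc_rec n
  have := cc_pos n
  have e : cc n - cc (n + 1) = 1 / (2 * (n:ℝ) + 2) * cc n := by
    field_simp
    linarith
  rw [e]
  have h0 : (0:ℝ) ≤ n := by positivity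
  apply mul_le_mul_of_nonneg_right _ (cc_pos n).le
  apply one_div_le_one_div_of_le (by positivity)
  linarith

lemma kk_tendsto (n b : ℕ) : Filter.Tendsto (fun N => KK (n + N) (b + 1)) Filter.atTop (nhds 0) := by
  have h : Filter.Tendsto (fun N => KK N (b + 1)) Filter.atTop (nhds 0) := by
    refine squeeze_zero (fun N => kk_nonneg _ _) (fun N => kk_bound N b) ?_
    simpa using (tendsto_one_div_add_atTop_nhds_zero_nat (𝕜 := ℝ)).const_mul (π ^ (2 * (b + 1)))
  have := (Filter.tendsto_add_atTop_iff_nat n).2 h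
  simpa [add_comm] using this

lemma kk_hasSum (n b : ℕ) :
    HasSum (fun k : ℕ => 1 / ((n + k + 1 : ℕ) : ℝ) ^ 2 * KK (n + k + 1) b) (KK n (b + 1)) := by
  rw [hasSum_iff_tendsto_nat_of_nonneg]
  · have e : ∀ N, ∑ k ∈ Finset.range N, (1 / ((n + k + 1 : ℕ) : ℝ) ^ 2 * KK (n + k + 1) b)
        = KK n (b + 1) - KK (n + N) (b + 1) := by
      intro N
      have := Finset.sum_range_sub' (fun k => KK (n + k) (b + 1)) N
      simp only [add_zero] at this
      rw [← this]
      apply Finset.sum_congr rfl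
      intro k _
      have := kk_rec (n + k) b
      rw [← add_assoc, this]
      push_cast
      rfl
    simp only [e]
    simpa using (kk_tendsto n b).const_sub (KK n (b + 1))
  · intro k
    have := kk_nonneg (n + k + 1) b
    positivity

abbrev TT (b n : ℕ) := {f : Fin b → ℕ // StrictMono f ∧ ∀ i, n < f i}

def glue (b n : ℕ) (x : Σ k : ℕ, TT b (n + k + 1)) : TT (b + 1) n :=
  ⟨Fin.cons (n + x.1 + 1) x.2.1, by
    obtain ⟨k, f, hf, hf'⟩ := x
    refine ⟨?_, ?_⟩
    · intro i j hij
      induction j using Fin.cases with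
      | zero => exact absurd hij (Fin.not_lt_zero _)
      | succ j =>
        induction i using Fin.cases with
        | zero => simpa using hf' j
        | succ i => simpa using hf (by simpa using hij)
    · intro i
      induction i using Fin.cases with
      | zero => simp only [Fin.cons_zero]; omega
      | succ i => have := hf' i; simp only [Fin.cons_succ]; omega⟩

lemma glue_bij (b n : ℕ) : Function.Bijective (glue b n) := by
  constructor
  · rintro ⟨k, f, hf⟩ ⟨k', f', hf'⟩ h
    have h1 := congrArg Subtype.val h
    simp only [glue] at h1
    have h2 := congrFun h1 0
    simp at h2
    subst h2
    have h3 : f = f' := by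
      funext i
      have := congrFun h1 i.succ
      simpa using this
    subst h3
    rfl
  · rintro ⟨f, hf, hf'⟩
    have h0 := hf' 0
    refine ⟨⟨f 0 - n - 1, Fin.tail f, ?_, ?_⟩, ?_⟩
    · intro i j hij
      exact hf (by simpa using hij)
    · intro i
      have : f 0 < f i.succ := hf (Fin.succ_pos i)
      simp only [Fin.tail]
      omega
    · apply Subtype.ext
      simp only [glue]
      have : n + (f 0 - n - 1) + 1 = f 0 := by omega
      rw [this]
      exact Fin.cons_self_tail f

lemma kk_zero (n : ℕ) : KK n 0 = 1 := by
  unfold KK; rw [jj_zero, div_self (cc_pos n).ne']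

lemma tail_hasSum (b : ℕ) : ∀ n,
    HasSum (fun f : TT b n => ∏ i, 1 / ((f.1 i : ℝ)) ^ 2) (KK n b) := by
  induction b with
  | zero =>
    intro n
    rw [kk_zero]
    have : Unique (TT 0 n) :=
      { default := ⟨Fin.elim0, fun i => i.elim0, fun i => i.elim0⟩
        uniq := fun a => Subtype.ext (Subsingleton.elim _ _) }
    have h := hasSum_unique (fun f : TT 0 n => ∏ i, 1 / ((f.1 i : ℝ)) ^ 2)
    simpa using h
  | succ b ih =>
    intro n
    rw [← (Equiv.ofBijective _ (glue_bij b n)).hasSum_iff]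
    have e : ((fun f : TT (b + 1) n => ∏ i, 1 / ((f.1 i : ℝ)) ^ 2) ∘
        (Equiv.ofBijective _ (glue_bij b n))) =
        fun x : Σ k : ℕ, TT b (n + k + 1) =>
          1 / ((n + x.1 + 1 : ℕ) : ℝ) ^ 2 * ∏ i, 1 / ((x.2.1 i : ℝ)) ^ 2 := by
      funext x
      simp [glue, Fin.prod_univ_succ, mul_comm]
    rw [e]
    have hs : ∀ k, HasSum (fun f : TT b (n + k + 1) =>
        1 / ((n + k + 1 : ℕ) : ℝ) ^ 2 * ∏ i, 1 / ((f.1 i : ℝ)) ^ 2)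
        (1 / ((n + k + 1 : ℕ) : ℝ) ^ 2 * KK (n + k + 1) b) := fun k => (ih _).mul_left _
    refine HasSum.sigma_of_hasSum (kk_hasSum n b) hs ?_
    rw [summable_sigma_of_nonneg]
    · refine ⟨fun k => (hs k).summable, ?_⟩
      simp only [(hs _).tsum_eq]
      exact (kk_hasSum n b).summable
    · intro x
      positivity

lemma integral_cov (n b : ℕ) :
    (∫ x in (0:ℝ)..1, x ^ (2 * n + 1) * pp (2 * b + 1) (arccos x)) =
    ∫ t in (0:ℝ)..(π / 2), cos t ^ (2 * n + 1) * pp (2 * b + 1) t * sin t := by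
  have hc := pp_cont (2 * b + 1)
  have h := intervalIntegral.integral_comp_mul_deriv (a := 0) (b := π / 2) (f := cos)
    (f' := fun t => - sin t) (g := fun x => x ^ (2 * n + 1) * pp (2 * b + 1) (arccos x))
    (fun t _ => hasDerivAt_cos t) (by fun_prop) (by
      have := continuous_arccos
      fun_prop)
  rw [cos_zero, cos_pi_div_two, intervalIntegral.integral_symm 0 1] at h
  rw [← neg_inj, ← h, ← intervalIntegral.integral_neg]
  apply intervalIntegral.integral_congr
  intro t ht
  rw [Set.uIcc_of_le (by positivity)] at ht
  simp only [Function.comp]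
  rw [arccos_cos ht.1 (by linarith [ht.2, pi_pos])]
  ring

lemma integral_parts (n b : ℕ) :
    (∫ t in (0:ℝ)..(π / 2), cos t ^ (2 * n + 1) * pp (2 * b + 1) t * sin t) =
      JJ (n + 1) b / (n + 1) := by
  have hc := pp_cont (2 * b + 1)
  have hi : IntervalIntegrable (fun t => cos t ^ (2 * n + 1) * pp (2 * b + 1) t * sin t)
    MeasureTheory.volume 0 (π / 2) := Continuous.intervalIntegrable (by fun_prop) _ _
  have key : ∫ t in (0:ℝ)..(π / 2),
      (2 * (cos t ^ (2 * (n + 1)) * pp (2 * b) t)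
        - (2 * n + 2) * (cos t ^ (2 * n + 1) * pp (2 * b + 1) t * sin t)) = 0 := by
    rw [intervalIntegral.integral_eq_sub_of_hasDerivAt (f := fun t =>
      cos t ^ (2 * n + 1 + 1) * pp (2 * b + 1) t)]
    · simp [pp_zero]
    · intro t _
      refine HasDerivAt.congr_deriv ((cos_pow_deriv (2 * n + 1) t).mul (pp_deriv (2 * b) t)) ?_
      push_cast
      ring
    · exact ((jj_int (n+1) b _ _).const_mul _).sub (hi.const_mul _)
  rw [intervalIntegral.integral_sub ((jj_int (n+1) b _ _).const_mul _) (hi.const_mul _)] at key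
  simp only [intervalIntegral.integral_const_mul] at key
  rw [eq_div_iff (by positivity)]
  unfold JJ
  linarith

theorem arccos_odd_moments (n b : ℕ) (hn : 0 < n) :
    (∫ x in (0:ℝ)..1, x ^ (2 * n - 1) *
        ((2 * Real.arccos x) ^ (2 * b + 1) / (Nat.factorial (2 * b + 1)))) =
      ((Nat.choose (2 * n) n : ℝ) / ((n : ℝ) * 4 ^ n)) * (π / 2) * zetaTail b n := by
  obtain ⟨m, rfl⟩ : ∃ m, n = m + 1 := ⟨n - 1, by omega⟩
  have hz : zetaTail b (m + 1) = KK (m + 1) b := (tail_hasSum b (m + 1)).tsum_eq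
  have h := (integral_cov m b).trans (integral_parts m b)
  rw [hz, show 2 * (m + 1) - 1 = 2 * m + 1 by omega]
  refine h.trans ?_
  have e : JJ (m + 1) b = cc (m + 1) * KK (m + 1) b := by
    unfold KK
    rw [mul_div_cancel₀ _ (cc_pos _).ne']
  rw [e]
  unfold cc
  push_cast
  field_simp
end

section
/- For every nonnegative integer a and real x with |x| ≤ 1, (2 arcsin x)^(2a+2)/(2a+2)! = Σ_{n=1}^∞ (4^n/(n² C(2n,n))) x^(2n) Σ_{n₁ < n₂ < ... < n_a < n} 1/(n₁² ⋯ n_a²), where for a = 0 the inner sum is 1. -/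
open Real

/-- `∑_{0 < n₁ < ⋯ < n_a < n} 1/(n₁² ⋯ n_a²)`; equals `1` when `a = 0`. -/
noncomputable def zetaHead (a n : ℕ) : ℝ :=
  ∑' f : {f : Fin a → ℕ // StrictMono f ∧ ∀ i, 0 < f i ∧ f i < n},
    ∏ i, 1 / ((f.1 i : ℝ)) ^ 2

def headSet (a n : ℕ) : Set (Fin a → ℕ) := {f | StrictMono f ∧ ∀ i, 0 < f i ∧ f i < n}

lemma headSet_finite (a n : ℕ) : (headSet a n).Finite := by
  refine (Set.Finite.pi' (t := fun _ : Fin a => Set.Iio n) (fun _ => Set.finite_Iio n)).subset ?_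
  intro f hf i
  exact (hf.2 i).2

lemma zetaHead_eq (a n : ℕ) :
    zetaHead a n = ∑' f : headSet a n, ∏ i, 1 / ((f.1 i : ℝ)) ^ 2 := rfl

lemma zetaHead_zero (n : ℕ) : zetaHead 0 n = 1 := by
  rw [zetaHead_eq]
  have : headSet 0 n = {Fin.elim0} := by
    ext f
    simp only [headSet, Set.mem_ofPred_eq, Set.mem_singleton_iff]
    constructor
    · intro _; exact Subsingleton.elim _ _
    · intro _; exact ⟨fun i => i.elim0, fun i => i.elim0⟩
  rw [this, tsum_singleton (f := fun f : Fin 0 → ℕ => ∏ i, 1 / ((f i : ℝ)) ^ 2)]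
  simp

lemma zetaHead_succ_zero (a : ℕ) : zetaHead (a + 1) 0 = 0 := by
  rw [zetaHead_eq]
  have : headSet (a+1) 0 = ∅ := by
    ext f
    simp only [headSet, Set.mem_ofPred_eq, Set.mem_empty_iff_false, iff_false]
    intro h
    exact absurd (h.2 0).2 (by simp)
  rw [this, tsum_empty]

lemma headSet_succ (a n : ℕ) (hn : 0 < n) :
    headSet (a+1) (n+1) = headSet (a+1) n ∪ (fun f => (Fin.snoc f n : Fin (a+1) → ℕ)) '' headSet a n := by
  ext f
  simp only [headSet, Set.mem_ofPred_eq, Set.mem_union, Set.mem_image]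
  constructor
  · rintro ⟨hm, hb⟩
    by_cases hl : f (Fin.last a) = n
    · right
      refine ⟨Fin.init f, ⟨?_, ?_⟩, ?_⟩
      · intro i j hij
        exact hm (by simpa using hij)
      · intro i
        refine ⟨(hb _).1, ?_⟩
        have := hm (Fin.castSucc_lt_last i)
        simpa [Fin.init, hl] using this
      · rw [← hl, Fin.snoc_init_self]
    · left
      refine ⟨hm, fun i => ⟨(hb i).1, ?_⟩⟩
      have h1 := hm.monotone (Fin.le_last i)
      have h2 := (hb (Fin.last a)).2
      omega
  · rintro (⟨hm, hb⟩ | ⟨g, ⟨hm, hb⟩, rfl⟩)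
    · exact ⟨hm, fun i => ⟨(hb i).1, by have := (hb i).2; omega⟩⟩
    · refine ⟨?_, ?_⟩
      · intro i j hij
        induction j using Fin.lastCases with
        | last =>
          induction i using Fin.lastCases with
          | last => exact absurd hij (lt_irrefl _)
          | cast i => simpa using (hb i).2
        | cast j =>
          induction i using Fin.lastCases with
          | last => exact absurd hij (not_lt.2 (Fin.le_last _))
          | cast i => simpa using hm (by simpa using hij)
      · intro i
        induction i using Fin.lastCases with
        | last => simpa using hn
        | cast i => 
          have := hb i
          simp only [Fin.snoc_castSucc]
          omega

lemma zetaHead_succ (a n : ℕ) :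
    zetaHead (a + 1) (n + 1) = zetaHead (a + 1) n + zetaHead a n / (n : ℝ) ^ 2 := by
  rcases Nat.eq_zero_or_pos n with rfl | hn
  · rw [zetaHead_succ_zero, zetaHead_eq]
    have : headSet (a+1) (0+1) = ∅ := by
      ext f
      simp only [headSet, Set.mem_ofPred_eq, Set.mem_empty_iff_false, iff_false]
      intro h
      have := h.2 0
      omega
    rw [this, tsum_empty]
    simp
  · rw [zetaHead_eq, zetaHead_eq, zetaHead_eq, headSet_succ a n hn]
    have := (headSet_finite (a+1) n).to_subtype
    have := (headSet_finite a n).to_subtype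
    rw [Summable.tsum_union_disjoint (f := fun f : Fin (a+1) → ℕ => ∏ i, 1 / ((f i : ℝ)) ^ 2)]
    · congr 1
      rw [tsum_image (f := fun f : Fin (a+1) → ℕ => ∏ i, 1 / ((f i : ℝ)) ^ 2)]
      · rw [← tsum_div_const]
        congr 1
        ext f
        simp [Fin.prod_univ_castSucc, div_eq_mul_inv, mul_comm]
      · intro f _ g _ h
        have := congrArg (Fin.init (α := fun _ => ℕ)) h
        simpa using this
    · rw [Set.disjoint_left]
      rintro f hf ⟨g, hg, rfl⟩
      have := (hf.2 (Fin.last a)).2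
      simp at this
    · exact Summable.of_finite
    · have := ((headSet_finite a n).image (fun f => (Fin.snoc f n : Fin (a+1) → ℕ))).to_subtype
      exact Summable.of_finite

lemma zetaHead_nonneg (a n : ℕ) : 0 ≤ zetaHead a n :=
  tsum_nonneg fun f => Finset.prod_nonneg fun i _ => by positivity

lemma zetaHead_le (a n : ℕ) : zetaHead a n ≤ (n + 1 : ℝ) ^ a := by
  induction a generalizing n with
  | zero => simp [zetaHead_zero]
  | succ a iha =>
    induction n with
    | zero => rw [zetaHead_succ_zero]; positivity
    | succ n ihn =>
      rw [zetaHead_succ]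
      have h1 : zetaHead a n / (n : ℝ)^2 ≤ (n+1:ℝ)^a := by
        rcases Nat.eq_zero_or_pos n with rfl | hn
        · simp
        · refine (div_le_self (zetaHead_nonneg a n) ?_).trans (iha n)
          have : (1:ℝ) ≤ n := by exact_mod_cast hn
          nlinarith
      have h2 : (n+1:ℝ)^a ≤ (n+1+1:ℝ)^a := by gcongr; linarith
      push_cast
      have h3 : (0:ℝ) ≤ n + 1 := by positivity
      calc _ ≤ (n+1:ℝ)^(a+1) + (n+1:ℝ)^a := add_le_add ihn h1
        _ = (n+1:ℝ)^a * (n+1+1) := by ring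
        _ ≤ (n+1+1:ℝ)^a * (n+1+1) := by gcongr
        _ = _ := by ring

/-- coefficient `4^n/(n² C(2n,n))`. -/
noncomputable def bco (n : ℕ) : ℝ := 4 ^ n / ((n : ℝ) ^ 2 * (Nat.choose (2 * n) n : ℝ))

lemma bco_zero : bco 0 = 0 := by simp [bco]

lemma bco_nonneg (n : ℕ) : 0 ≤ bco n := by unfold bco; positivity

lemma bco_one : bco 1 = 2 := by norm_num [bco]

lemma bco_succ (n : ℕ) (hn : 0 < n) :
    (2 * n + 2) * (2 * n + 1) * bco (n+1) = 4 * (n:ℝ)^2 * bco n := by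
  have h := Nat.succ_mul_centralBinom_succ n
  have h' : ((n:ℝ)+1) * (Nat.centralBinom (n+1)) = 2 * (2*n+1) * Nat.centralBinom n := by
    exact_mod_cast h
  have hc : (0:ℝ) < Nat.centralBinom n := by exact_mod_cast Nat.centralBinom_pos n
  have hc' : (0:ℝ) < Nat.centralBinom (n+1) := by exact_mod_cast Nat.centralBinom_pos (n+1)
  have hn' : (0:ℝ) < n := by exact_mod_cast hn
  unfold bco
  rw [← Nat.centralBinom_eq_two_mul_choose, ← Nat.centralBinom_eq_two_mul_choose]
  push_cast
  have h4 : (4:ℝ)^(n+1) = 4 * 4^n := by ring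
  rw [h4]
  rw [← mul_div_assoc, ← mul_div_assoc, div_eq_div_iff (by positivity) (by positivity)]
  linear_combination (-4 * (n+1) * (4:ℝ)^n * n^2) * h'

lemma sq_mul_bco_le (n : ℕ) : (n:ℝ)^2 * bco n ≤ 2 * n := by
  rcases Nat.eq_zero_or_pos n with rfl | hn
  · simp
  have hc : (0:ℝ) < Nat.centralBinom n := by exact_mod_cast Nat.centralBinom_pos n
  have hn' : (0:ℝ) < n := by exact_mod_cast hn
  have h : (4:ℝ)^n ≤ 2 * n * Nat.centralBinom n := by
    exact_mod_cast Nat.four_pow_le_two_mul_self_mul_centralBinom n hn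
  unfold bco
  rw [← Nat.centralBinom_eq_two_mul_choose, ← mul_div_assoc, div_le_iff₀ (by positivity)]
  nlinarith [sq_nonneg (n:ℝ)]

noncomputable def dco : ℕ → ℕ → ℝ
  | 0, n => if n = 0 then 1 else 0
  | a + 1, n => bco n * zetaHead a n

lemma dco_nonneg (k n : ℕ) : 0 ≤ dco k n := by
  cases k with
  | zero => simp only [dco]; split_ifs <;> norm_num
  | succ k => exact mul_nonneg (bco_nonneg n) (zetaHead_nonneg k n)

lemma dco_rec (k n : ℕ) :
    (2 * n + 2) * (2 * n + 1) * dco (k+1) (n+1) = 4 * (n:ℝ)^2 * dco (k+1) n + 4 * dco k n := by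
  rcases Nat.eq_zero_or_pos n with rfl | hn
  · cases k with
    | zero => simp [dco, bco_one, bco_zero, zetaHead_zero]; norm_num
    | succ k => simp [dco, bco_one, bco_zero, zetaHead_succ, zetaHead_succ_zero]
  · have hb := bco_succ n hn
    have hn' : (n:ℝ) ≠ 0 := by positivity
    cases k with
    | zero =>
      simp only [dco, zetaHead_zero, hn.ne', if_false]
      linear_combination hb
    | succ k =>
      simp only [dco, zetaHead_succ]
      have : (2 * n + 2) * (2 * n + 1) * (bco (n + 1) * (zetaHead (k+1) n + zetaHead k n / (n:ℝ)^2))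
        = (4 * (n:ℝ)^2 * bco n) * (zetaHead (k+1) n + zetaHead k n / (n:ℝ)^2) := by
        rw [← hb]; ring
      rw [this]
      field_simp

noncomputable def Sp (k N : ℕ) (t : ℝ) : ℝ := ∑ n ∈ Finset.range N, dco k n * sin t ^ (2 * n)
noncomputable def Sp1 (k N : ℕ) (t : ℝ) : ℝ :=
  ∑ n ∈ Finset.range N, dco k n * (2 * n * sin t ^ (2 * n - 1) * cos t)

lemma Sp_deriv (k N : ℕ) (t : ℝ) : HasDerivAt (Sp k N) (Sp1 k N t) t := by
  unfold Sp Sp1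
  refine HasDerivAt.fun_sum fun n _ => ?_
  have := ((hasDerivAt_sin t).fun_pow (2*n)).const_mul (dco k n)
  refine this.congr_deriv ?_
  push_cast
  ring

lemma Sp1_deriv (k N : ℕ) (t : ℝ) : HasDerivAt (Sp1 (k+1) (N+1))
    (4 * Sp k N t - 4 * (N:ℝ)^2 * dco (k+1) N * sin t ^ (2*N)) t := by
  induction N with
  | zero =>
    have : Sp1 (k+1) (0+1) = fun _ => 0 := by ext s; simp [Sp1]
    rw [this]
    simpa [Sp] using hasDerivAt_const t (0:ℝ)
  | succ N ih =>
    have : Sp1 (k+1) (N+1+1) = fun t => Sp1 (k+1) (N+1) t +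
       dco (k+1) (N+1) * (2 * (N+1:ℕ) * sin t ^ (2 * N + 1) * cos t) := by
      ext s
      rw [Sp1, Finset.sum_range_succ]
      rfl
    rw [this]
    have h2 := (((((hasDerivAt_sin t).fun_pow (2*N+1)).const_mul (2 * ((N+1:ℕ):ℝ))).fun_mul
      (hasDerivAt_cos t)).const_mul (dco (k+1) (N+1)))
    refine (ih.fun_add h2).congr_deriv ?_
    have hS : Sp k (N+1) t = Sp k N t + dco k N * sin t ^ (2*N) := by
      rw [Sp, Finset.sum_range_succ]; rfl
    rw [hS]
    have hr := dco_rec k N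
    have hc : cos t ^ 2 = 1 - sin t ^ 2 := by rw [cos_sq']
    push_cast
    have e2 : sin t ^ (2 * (N+1)) = sin t ^ (2*N) * sin t ^ 2 := by rw [← pow_add]; rfl
    have e3 : sin t ^ (2 * N+1) = sin t ^ (2*N) * sin t := pow_succ _ _
    rw [e2, e3]
    linear_combination (sin t ^ (2*N)) * hr + (dco (k+1) (N+1) * 2 * (N+1) * (2*N+1) * sin t ^ (2*N)) * hc

noncomputable def gk (k : ℕ) (t : ℝ) : ℝ := (2 * t) ^ (2 * k) / (Nat.factorial (2 * k))
noncomputable def gk1 (k : ℕ) (t : ℝ) : ℝ := 2 * (2 * t) ^ (2 * k + 1) / (Nat.factorial (2 * k + 1))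

lemma gk_deriv (k : ℕ) (t : ℝ) : HasDerivAt (gk (k+1)) (gk1 k t) t := by
  unfold gk gk1
  have := ((((hasDerivAt_id t).const_mul 2).fun_pow (2*(k+1))).div_const
    (Nat.factorial (2 * (k+1)) : ℝ))
  refine this.congr_deriv ?_
  have e : 2 * (k+1) = 2*k+1+1 := by ring
  rw [e, Nat.factorial_succ (2*k+1)]
  have := Nat.factorial_pos (2*k+1)
  push_cast
  simp only [id]
  field_simp

lemma gk1_deriv (k : ℕ) (t : ℝ) : HasDerivAt (gk1 k) (4 * gk k t) t := by
  unfold gk gk1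
  have := ((((hasDerivAt_id t).const_mul 2).fun_pow (2*k+1)).const_mul 2).div_const
    (Nat.factorial (2 * k+1) : ℝ)
  refine this.congr_deriv ?_
  rw [Nat.factorial_succ (2*k)]
  have := Nat.factorial_pos (2*k)
  push_cast
  simp only [id]
  field_simp
  ring

/-- mean value inequality on `[0,c]` from zero. -/
lemma mvi {f f' : ℝ → ℝ} {c C : ℝ} (hf : ∀ t, HasDerivAt f (f' t) t) (h0 : f 0 = 0)
    (hb : ∀ t, 0 ≤ t → t ≤ c → |f' t| ≤ C) : ∀ t, 0 ≤ t → t ≤ c → |f t| ≤ C * t := by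
  intro t ht htc
  have := norm_image_sub_le_of_norm_deriv_le_segment' (f := f) (f' := f') (a := 0) (b := c) (C := C)
    (fun x _ => (hf x).hasDerivWithinAt) (fun x hx => hb x hx.1 hx.2.le) t ⟨ht, htc⟩
  simpa [h0] using this

lemma tail_tendsto (k : ℕ) (s : ℝ) (hs0 : 0 ≤ s) (hs : s < 1) :
    Filter.Tendsto (fun N : ℕ => 4 * (N:ℝ)^2 * dco (k+1) N * s ^ (2*N)) Filter.atTop (nhds 0) := by
  have hs2 : s^2 < 1 := by nlinarith
  have h1 := tendsto_pow_const_mul_const_pow_of_abs_lt_one (k+1) (r := s^2)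
    (by rw [abs_of_nonneg (sq_nonneg s)]; exact hs2)
  have h2 := h1.const_mul (8 * 2^k)
  rw [mul_zero] at h2
  refine squeeze_zero' ?_ ?_ h2
  · exact Filter.Eventually.of_forall fun N => by have := dco_nonneg (k+1) N; positivity
  · filter_upwards [Filter.eventually_ge_atTop 1] with N hN
    have hN' : (1:ℝ) ≤ N := by exact_mod_cast hN
    have hz : zetaHead k N ≤ (2 * N:ℝ)^k :=
      (zetaHead_le k N).trans (by gcongr; linarith)
    have hb := sq_mul_bco_le N
    have hz0 := zetaHead_nonneg k N
    calc _ = 4 * ((N:ℝ)^2 * bco N) * zetaHead k N * s^(2*N) := by simp only [dco]; ring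
      _ ≤ 4 * (2 * N) * (2 * N:ℝ)^k * s^(2*N) := by gcongr
      _ = _ := by rw [pow_mul, mul_pow]; ring

lemma Sp_unif (k : ℕ) (c : ℝ) (hc0 : 0 ≤ c) (hc : c < π / 2) :
    ∀ ε > 0, ∃ N0, ∀ N ≥ N0, ∀ t, 0 ≤ t → t ≤ c → |gk k t - Sp k N t| ≤ ε := by
  induction k with
  | zero =>
    intro ε hε
    refine ⟨1, fun N hN t _ _ => ?_⟩
    have : Sp 0 N t = 1 := by
      obtain ⟨M, rfl⟩ : ∃ M, N = M + 1 := ⟨N-1, by omega⟩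
      rw [Sp, Finset.sum_range_succ']
      simp [dco]
    simp [this, gk, hε.le]
  | succ k ih =>
    intro ε hε
    set δ := ε / (5 * (c + 1)^2) with hδ
    have hδ0 : 0 < δ := by positivity
    obtain ⟨N1, h1⟩ := ih δ hδ0
    have hs0 : 0 ≤ sin c := sin_nonneg_of_nonneg_of_le_pi hc0 (by linarith [pi_pos])
    have hs1 : sin c < 1 := by
      rw [← sin_pi_div_two]
      exact sin_lt_sin_of_lt_of_le_pi_div_two (by linarith) le_rfl hc
    obtain ⟨N2, h2⟩ := Filter.eventually_atTop.1
      ((tail_tendsto k (sin c) hs0 hs1).eventually (gt_mem_nhds hδ0))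
    refine ⟨max N1 N2 + 1, fun N hN => ?_⟩
    obtain ⟨M, rfl⟩ : ∃ M, N = M + 1 := ⟨N-1, by omega⟩
    have hM1 : M ≥ N1 := by have := le_max_left N1 N2; omega
    have hM2 : M ≥ N2 := by have := le_max_right N1 N2; omega
    have hA := mvi (f := fun t => gk1 k t - Sp1 (k+1) (M+1) t) (c := c) (C := 5 * δ)
      (fun t => (gk1_deriv k t).fun_sub (Sp1_deriv k M t))
      (by
        simp only [gk1, Sp1, Finset.sum_range_succ']
        simp only [sin_zero]
        simp
        refine Finset.sum_eq_zero fun i _ => ?_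
        have : 2 * (i+1) - 1 ≠ 0 := by omega
        simp [this])
      (by
        intro t ht htc
        have e1 := h1 M hM1 t ht htc
        have e2 := h2 M hM2
        have hst0 : 0 ≤ sin t := sin_nonneg_of_nonneg_of_le_pi ht (by linarith [pi_pos])
        have hst : sin t ≤ sin c := sin_le_sin_of_le_of_le_pi_div_two (by linarith) hc.le htc
        have hd := dco_nonneg (k+1) M
        have e3 : 4 * (M:ℝ)^2 * dco (k+1) M * sin t ^ (2*M) ≤
          4 * (M:ℝ)^2 * dco (k+1) M * sin c ^ (2*M) := by gcongr
        have e4 : 0 ≤ 4 * (M:ℝ)^2 * dco (k+1) M * sin t ^ (2*M) := by positivity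
        rw [abs_le] at e1 ⊢
        constructor <;> linarith)
    have hB := mvi (f := fun t => gk (k+1) t - Sp (k+1) (M+1) t) (c := c) (C := 5 * δ * c)
      (fun t => (gk_deriv k t).fun_sub (Sp_deriv (k+1) (M+1) t))
      (by
        simp only [gk, Sp, Finset.sum_range_succ']
        simp [dco, bco_zero])
      (by
        intro t ht htc
        refine (hA t ht htc).trans ?_
        gcongr)
    intro t ht htc
    refine (hB t ht htc).trans ?_
    calc 5 * δ * c * t ≤ 5 * δ * (c+1) * (c+1) := by gcongr <;> linarith
      _ = ε := by rw [hδ]; field_simp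

lemma hasSum_arcsin_lt (k : ℕ) (x : ℝ) (h0 : 0 ≤ x) (h1 : x < 1) :
    HasSum (fun n => dco k n * x ^ (2*n)) (gk k (arcsin x)) := by
  have hnn : ∀ n, 0 ≤ dco k n * x ^ (2*n) := fun n => by
    have := dco_nonneg k n; positivity
  rw [hasSum_iff_tendsto_nat_of_nonneg hnn, Metric.tendsto_atTop]
  intro ε hε
  obtain ⟨N0, h⟩ := Sp_unif k (arcsin x) (arcsin_nonneg.2 h0) (arcsin_lt_pi_div_two.2 h1)
    (ε/2) (by positivity)
  refine ⟨N0, fun N hN => ?_⟩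
  have := h N hN (arcsin x) (arcsin_nonneg.2 h0) le_rfl
  rw [Sp, sin_arcsin (by linarith) h1.le] at this
  rw [dist_comm, Real.dist_eq]
  linarith

lemma gk_cont (k : ℕ) : Continuous fun x => gk k (arcsin x) := by
  unfold gk
  have := continuous_arcsin
  fun_prop

lemma hasSum_one (k : ℕ) : HasSum (fun n => dco k n * (1:ℝ) ^ (2*n)) (gk k (arcsin 1)) := by
  have hg : Filter.Tendsto (fun x => gk k (arcsin x)) (nhdsWithin 1 (Set.Iio 1))
      (nhds (gk k (arcsin 1))) := (gk_cont k).continuousAt.tendsto.mono_left nhdsWithin_le_nhds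
  have hev : ∀ᶠ x : ℝ in nhdsWithin 1 (Set.Iio 1), 0 ≤ x ∧ x < 1 := by
    filter_upwards [Ioo_mem_nhdsLT (show (0:ℝ) < 1 by norm_num)] with x hx
    exact ⟨hx.1.le, hx.2⟩
  have hnn : ∀ x : ℝ, 0 ≤ x → ∀ n, 0 ≤ dco k n * x ^ (2*n) := fun x hx n => by
    have := dco_nonneg k n; positivity
  have hbd : ∀ s : Finset ℕ, ∑ n ∈ s, dco k n * (1:ℝ) ^ (2*n) ≤ gk k (arcsin 1) := by
    intro s
    have hc : Continuous fun x : ℝ => ∑ n ∈ s, dco k n * x ^ (2*n) := by fun_prop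
    refine le_of_tendsto_of_tendsto
      (hc.continuousAt.tendsto.mono_left (nhdsWithin_le_nhds (s := Set.Iio 1))) hg ?_
    filter_upwards [hev] with x hx
    exact sum_le_hasSum s (fun n _ => hnn x hx.1 n) (hasSum_arcsin_lt k x hx.1 hx.2)
  have hsum : Summable (fun n => dco k n * (1:ℝ) ^ (2*n)) :=
    summable_of_sum_le (hnn 1 zero_le_one) hbd
  have hle : ∑' n, dco k n * (1:ℝ) ^ (2*n) ≤ gk k (arcsin 1) := 
    hsum.tsum_le_of_sum_le hbd
  have hge : gk k (arcsin 1) ≤ ∑' n, dco k n * (1:ℝ) ^ (2*n) := by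
    refine le_of_tendsto hg ?_
    filter_upwards [hev] with x hx
    refine hasSum_le (fun n => ?_) (hasSum_arcsin_lt k x hx.1 hx.2) hsum.hasSum
    have := dco_nonneg k n
    have := hx.1
    have := hx.2.le
    gcongr
  rw [← le_antisymm hle hge]
  exact hsum.hasSum

lemma hasSum_all (k : ℕ) (x : ℝ) (hx : |x| ≤ 1) :
    HasSum (fun n => dco k n * x ^ (2*n)) (gk k (arcsin x)) := by
  have h : HasSum (fun n => dco k n * |x| ^ (2*n)) (gk k (arcsin |x|)) := by
    rcases hx.lt_or_eq with h | h
    · exact hasSum_arcsin_lt k _ (abs_nonneg x) h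
    · rw [h]; exact hasSum_one k
  have e1 : ∀ n, |x| ^ (2*n) = x^(2*n) := fun n => by rw [pow_mul, sq_abs, ← pow_mul]
  have e2 : gk k (arcsin |x|) = gk k (arcsin x) := by
    rcases abs_choice x with h | h <;> rw [h]
    rw [arcsin_neg, gk, gk, pow_mul, pow_mul]
    congr 2
    ring
  rw [e2] at h
  simpa only [e1] using h

theorem arcsin_even_powers (a : ℕ) (x : ℝ) (hx : |x| ≤ 1) :
    (2 * Real.arcsin x) ^ (2 * a + 2) / (Nat.factorial (2 * a + 2)) =
      ∑' n : ℕ+, (4 ^ (n : ℕ) / ((n : ℝ) ^ 2 * (Nat.choose (2 * n) n : ℝ))) *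
        x ^ (2 * (n : ℕ)) * zetaHead a n := by
  have h := hasSum_all (a+1) x hx
  have h1 := tsum_pnat_eq_tsum_succ (f := fun n : ℕ => dco (a+1) n * x ^ (2*n))
  have h2 := h.summable.tsum_eq_zero_add
  rw [h.tsum_eq] at h2
  have h3 : dco (a+1) 0 * x^(2*0) = 0 := by simp [dco, bco_zero]
  rw [h3, zero_add, ← h1] at h2
  refine Eq.trans h2 ?_
  refine tsum_congr fun n => ?_
  simp only [dco, bco]
  ring
end
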